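/- Let n ≥ 2. There exists a constant C > 0, depending only on n, such that for every Schwartz function f : ℝⁿ → ℝ and all x, h ∈ ℝⁿ, the Euclidean norm of the vector v(x) := ∫_{|x−y|≤1} ((x − y)/|x − y|^{n+1}) (δ_h f(y) − δ_h f(x)) dy + ∫_{|x−y|>1} ((x − y)/|x − y|^{n+1}) δ_h f(y) dy satisfies |v(x)| ≤ C · (1 + (sup_{z} |f(z)|) · ln⁺ D₁(δ_h f)(x) + ‖f‖_{L²(ℝⁿ)}), where D₁(δ_h f)(x) := ∫_{ℝⁿ} |δ_h f(x) − δ_h f(x+y)|² / |y|^{n+1} dy. -/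

import Mathlib

open MeasureTheory

/-!
Let `d` be the dimension, `κ` the area of the unit sphere, and `u z = g x - g (x + z)` for
`g = δ_h f`. AM-GM gives
`|u z| / |z| ^ d ≤ ρ * (|u z| ^ 2 / |z| ^ (d + 1)) + ρ⁻¹ * (|z| / |z| ^ d)`,
so the ball of radius `ρ` contributes at most `ρ * D₁ + κ` to the integral defining the velocity.
The annulus `ρ < |z| ≤ 1` contributes at most `4 ‖f‖_∞ κ log (1 / ρ)`, and `ρ = 1 / max 1 D₁`
makes the first term bounded while turning the logarithm into `ln⁺ D₁`. On `|z| > 1` the kernel is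
square integrable, so Hölder's inequality gives the `L²` norm of `f`.
-/

open Set Module Real
open scoped fwdDiff NNReal ENNReal

section Radial

variable {E : Type*} [NormedAddCommGroup E] [NormedSpace ℝ E] [FiniteDimensional ℝ E]
  [Nontrivial E] [MeasurableSpace E] [BorelSpace E] (μ : Measure E) [μ.IsAddHaarMeasure]
  {G : Type*} [NormedAddCommGroup G] [NormedSpace ℝ G]

lemma integrableOn_preimage_norm_iff {φ : ℝ → G} {S : Set ℝ} (hS : MeasurableSet S) :
    IntegrableOn (fun z => φ ‖z‖) (norm ⁻¹' S) μ ↔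
      IntegrableOn (fun r => r ^ (finrank ℝ E - 1) • φ r) (Ioi 0 ∩ S) := by
  have hind : (norm ⁻¹' S).indicator (fun z : E => φ ‖z‖) = (S.indicator φ ‖·‖) :=
    funext fun _ => indicator_comp_right (g := φ) norm
  rw [← integrable_indicator_iff (measurable_norm hS), hind, integrable_fun_norm_addHaar]
  simp_rw [← indicator_smul_apply S (fun r : ℝ => r ^ (finrank ℝ E - 1)) φ]
  rw [IntegrableOn, integrable_indicator_iff hS, IntegrableOn, Measure.restrict_restrict hS,
    inter_comm, IntegrableOn]

lemma setIntegral_preimage_norm (φ : ℝ → G) {S : Set ℝ} (hS : MeasurableSet S) :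
    ∫ z in norm ⁻¹' S, φ ‖z‖ ∂μ =
      μ.toSphere.real univ • ∫ r in Ioi 0 ∩ S, r ^ (finrank ℝ E - 1) • φ r := by
  have hind : (norm ⁻¹' S).indicator (fun z : E => φ ‖z‖) = (S.indicator φ ‖·‖) :=
    funext fun _ => indicator_comp_right (g := φ) norm
  rw [← integral_indicator (measurable_norm hS), hind, integral_fun_norm_addHaar]
  simp_rw [← indicator_smul_apply S (fun r : ℝ => r ^ (finrank ℝ E - 1)) φ]
  rw [setIntegral_indicator hS, Measure.toSphere_real_apply_univ, mul_smul,
    Nat.cast_smul_eq_nsmul]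

lemma pow_sub_one_mul_div_pow {d : ℕ} (hd : d ≠ 0) {r : ℝ} (hr : r ≠ 0) (a : ℝ) :
    r ^ (d - 1) * (a / r ^ d) = a / r := by
  rw [← pow_sub_one_mul hd r]
  field_simp

lemma integrableOn_norm_div_norm_pow_finrank (ρ : ℝ) :
    IntegrableOn (fun z => ‖z‖ / ‖z‖ ^ finrank ℝ E) {z : E | ‖z‖ ≤ ρ} μ := by
  refine (integrableOn_preimage_norm_iff μ (φ := fun r => r / r ^ finrank ℝ E)
    (measurableSet_Iic (a := ρ))).2 ?_
  rw [Ioi_inter_Iic]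
  refine (integrableOn_const (C := (1 : ℝ)) (by simp)).congr_fun (fun r hr => ?_) measurableSet_Ioc
  simp [pow_sub_one_mul_div_pow finrank_pos.ne' hr.1.ne', hr.1.ne']

lemma setIntegral_norm_div_norm_pow_finrank {ρ : ℝ} (hρ : 0 ≤ ρ) :
    ∫ z in {z : E | ‖z‖ ≤ ρ}, ‖z‖ / ‖z‖ ^ finrank ℝ E ∂μ = μ.toSphere.real univ * ρ := by
  have hcongr : ∫ r in Ioc 0 ρ, r ^ (finrank ℝ E - 1) • (r / r ^ finrank ℝ E) =
      ∫ _ in Ioc 0 ρ, (1 : ℝ) := setIntegral_congr_fun measurableSet_Ioc fun r hr => by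
    simp [pow_sub_one_mul_div_pow finrank_pos.ne' hr.1.ne', hr.1.ne']
  refine (setIntegral_preimage_norm μ (fun r => r / r ^ finrank ℝ E) measurableSet_Iic).trans ?_
  rw [Ioi_inter_Iic, hcongr]
  simp [hρ]

lemma integrableOn_one_div_norm_pow_finrank_annulus {ρ R : ℝ} (hρ : 0 < ρ) (hR : ρ ≤ R) :
    IntegrableOn (fun z => 1 / ‖z‖ ^ finrank ℝ E) {z : E | ‖z‖ ∈ Ioc ρ R} μ := by
  refine (integrableOn_preimage_norm_iff μ (φ := fun r => 1 / r ^ finrank ℝ E)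
    (measurableSet_Ioc (a := ρ) (b := R))).2 ?_
  have hint : IntegrableOn (fun r : ℝ => 1 / r) (Ioc ρ R) :=
    (intervalIntegrable_iff_integrableOn_Ioc_of_le hR).1 <|
      intervalIntegral.intervalIntegrable_one_div
        (fun r hr => (hρ.trans_le (uIcc_of_le hR ▸ hr).1).ne') continuousOn_id
  rw [inter_eq_self_of_subset_right (Ioc_subset_Ioi_self.trans (Ioi_subset_Ioi hρ.le))]
  exact hint.congr_fun (fun r hr =>
    (pow_sub_one_mul_div_pow finrank_pos.ne' (hρ.trans hr.1).ne' 1).symm) measurableSet_Ioc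

lemma setIntegral_one_div_norm_pow_finrank_annulus {ρ R : ℝ} (hρ : 0 < ρ) (hR : ρ ≤ R) :
    ∫ z in {z : E | ‖z‖ ∈ Ioc ρ R}, 1 / ‖z‖ ^ finrank ℝ E ∂μ =
      μ.toSphere.real univ * log (R / ρ) := by
  have hcongr : ∫ r in Ioc ρ R, r ^ (finrank ℝ E - 1) • (1 / r ^ finrank ℝ E) =
      ∫ r in Ioc ρ R, 1 / r := setIntegral_congr_fun measurableSet_Ioc fun r hr =>
    pow_sub_one_mul_div_pow finrank_pos.ne' (hρ.trans hr.1).ne' 1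
  refine (setIntegral_preimage_norm μ (fun r => 1 / r ^ finrank ℝ E) measurableSet_Ioc).trans ?_
  rw [inter_eq_self_of_subset_right (Ioc_subset_Ioi_self.trans (Ioi_subset_Ioi hρ.le)), hcongr,
    ← intervalIntegral.integral_of_le hR, integral_one_div_of_pos hρ (hρ.trans_le hR), smul_eq_mul]

lemma integrableOn_one_div_norm_pow {k : ℕ} (hk : finrank ℝ E < k) {R : ℝ} (hR : 0 < R) :
    IntegrableOn (fun z => 1 / ‖z‖ ^ k) {z : E | R < ‖z‖} μ := by
  refine (integrableOn_preimage_norm_iff μ (φ := fun r => 1 / r ^ k)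
    (measurableSet_Ioi (a := R))).2 ?_
  rw [inter_eq_self_of_subset_right (Ioi_subset_Ioi hR.le)]
  have hexp : ((finrank ℝ E - 1 : ℕ) : ℝ) - k < -1 := by
    have : ((finrank ℝ E - 1 : ℕ) : ℝ) + 1 < k := by
      exact_mod_cast (Nat.sub_add_cancel finrank_pos).trans_lt hk
    linarith
  refine (integrableOn_Ioi_rpow_of_lt hexp hR).congr_fun (fun r hr => ?_) measurableSet_Ioi
  simp only [rpow_sub (hR.trans hr), rpow_natCast, smul_eq_mul, mul_one_div]

lemma memLp_two_restrict_of_norm_le_div_norm_pow {F : Type*} [NormedAddCommGroup F]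
    {K : E → F} {A : ℝ} (hKm : AEStronglyMeasurable K μ)
    (hK : ∀ z ≠ 0, ‖K z‖ ≤ A / ‖z‖ ^ finrank ℝ E) {R : ℝ} (hR : 0 < R) :
    MemLp K 2 (μ.restrict {z | R < ‖z‖}) := by
  rw [memLp_two_iff_integrable_sq_norm hKm.restrict]
  have hdim : finrank ℝ E < finrank ℝ E * 2 := by have := finrank_pos (R := ℝ) (M := E); omega
  refine ((integrableOn_one_div_norm_pow μ hdim hR).const_mul (A ^ 2)).mono'
    (hKm.restrict.norm.pow 2) ?_
  filter_upwards [ae_restrict_mem (measurable_norm measurableSet_Ioi)] with z (hz : R < ‖z‖)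
  rw [norm_of_nonneg (by positivity), mul_one_div, pow_mul, ← div_pow]
  gcongr
  exact hK z (norm_pos_iff.1 (hR.trans hz))

end Radial

section LogInterpolation

variable {E : Type*} [NormedAddCommGroup E] [NormedSpace ℝ E] [FiniteDimensional ℝ E]
  [Nontrivial E] [MeasurableSpace E] [BorelSpace E] {μ : Measure E} [μ.IsAddHaarMeasure]
  {u : E → ℝ}

lemma div_pow_le_add {d : ℕ} (hd : d ≠ 0) {a r ρ : ℝ} (ha : 0 ≤ a) (hr : 0 ≤ r) (hρ : 0 < ρ) :
    a / r ^ d ≤ ρ * (a ^ 2 / r ^ (d + 1)) + ρ⁻¹ * (r / r ^ d) := by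
  rcases hr.eq_or_lt with rfl | hr
  · simp [hd]
  have hgap : ρ * (a ^ 2 / r ^ (d + 1)) + ρ⁻¹ * (r / r ^ d) - a / r ^ d =
      ((ρ * a - r) ^ 2 + ρ * a * r) / (ρ * r ^ (d + 1)) := by
    field_simp
    ring
  exact sub_nonneg.1 (hgap ▸ by positivity)

lemma integrableOn_abs_div_norm_pow_finrank (hu : AEStronglyMeasurable u μ)
    (hD : Integrable (fun z => |u z| ^ 2 / ‖z‖ ^ (finrank ℝ E + 1)) μ) (ρ : ℝ) :
    IntegrableOn (fun z => |u z| / ‖z‖ ^ finrank ℝ E) {z : E | ‖z‖ ≤ ρ} μ := by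
  have hmeas : AEStronglyMeasurable (fun z => |u z| / ‖z‖ ^ finrank ℝ E) μ :=
    (hu.aemeasurable.abs.div (by fun_prop)).aestronglyMeasurable
  refine ((hD.integrableOn.const_mul 1).add
    ((integrableOn_norm_div_norm_pow_finrank μ ρ).const_mul 1⁻¹)).mono' hmeas.restrict
    (ae_of_all _ fun z => ?_)
  rw [norm_of_nonneg (by positivity)]
  exact div_pow_le_add finrank_pos.ne' (abs_nonneg _) (norm_nonneg z) one_pos

lemma setIntegral_abs_div_norm_pow_finrank_ball_le (hu : AEStronglyMeasurable u μ)
    (hD : Integrable (fun z => |u z| ^ 2 / ‖z‖ ^ (finrank ℝ E + 1)) μ) {ρ : ℝ} (hρ : 0 < ρ) :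
    ∫ z in {z : E | ‖z‖ ≤ ρ}, |u z| / ‖z‖ ^ finrank ℝ E ∂μ ≤
      ρ * ∫ z, |u z| ^ 2 / ‖z‖ ^ (finrank ℝ E + 1) ∂μ + μ.toSphere.real univ := by
  have hnorm := (integrableOn_norm_div_norm_pow_finrank μ ρ).const_mul ρ⁻¹
  have hquad := hD.integrableOn (s := {z : E | ‖z‖ ≤ ρ}) |>.const_mul ρ
  have hle : ∫ z in {z : E | ‖z‖ ≤ ρ}, |u z| ^ 2 / ‖z‖ ^ (finrank ℝ E + 1) ∂μ ≤
      ∫ z, |u z| ^ 2 / ‖z‖ ^ (finrank ℝ E + 1) ∂μ :=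
    setIntegral_le_integral hD (ae_of_all _ fun z => by positivity)
  calc ∫ z in {z : E | ‖z‖ ≤ ρ}, |u z| / ‖z‖ ^ finrank ℝ E ∂μ
      ≤ ∫ z in {z : E | ‖z‖ ≤ ρ}, (ρ * (|u z| ^ 2 / ‖z‖ ^ (finrank ℝ E + 1)) +
          ρ⁻¹ * (‖z‖ / ‖z‖ ^ finrank ℝ E)) ∂μ :=
        setIntegral_mono (integrableOn_abs_div_norm_pow_finrank hu hD ρ)
          (Integrable.fun_add hquad hnorm)
          fun z => div_pow_le_add finrank_pos.ne' (abs_nonneg _) (norm_nonneg z) hρ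
    _ = ρ * ∫ z in {z : E | ‖z‖ ≤ ρ}, |u z| ^ 2 / ‖z‖ ^ (finrank ℝ E + 1) ∂μ +
          μ.toSphere.real univ := by
        rw [integral_add hquad hnorm, integral_const_mul, integral_const_mul,
          setIntegral_norm_div_norm_pow_finrank μ hρ.le]
        field_simp
    _ ≤ ρ * ∫ z, |u z| ^ 2 / ‖z‖ ^ (finrank ℝ E + 1) ∂μ + μ.toSphere.real univ := by gcongr

lemma setIntegral_abs_div_norm_pow_finrank_annulus_le (hu : AEStronglyMeasurable u μ)
    (hD : Integrable (fun z => |u z| ^ 2 / ‖z‖ ^ (finrank ℝ E + 1)) μ) {B : ℝ}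
    (hB : ∀ z, |u z| ≤ B) {ρ R : ℝ} (hρ : 0 < ρ) (hR : ρ ≤ R) :
    ∫ z in {z : E | ‖z‖ ∈ Ioc ρ R}, |u z| / ‖z‖ ^ finrank ℝ E ∂μ ≤
      B * (μ.toSphere.real univ * log (R / ρ)) := by
  rw [← setIntegral_one_div_norm_pow_finrank_annulus μ hρ hR, ← integral_const_mul]
  refine setIntegral_mono ?_
    ((integrableOn_one_div_norm_pow_finrank_annulus μ hρ hR).const_mul B) fun z => ?_
  · exact (integrableOn_abs_div_norm_pow_finrank hu hD R).mono_set fun z hz => hz.2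
  · simp only [mul_one_div]
    gcongr
    exact hB z

theorem setIntegral_abs_div_norm_pow_finrank_le_posLog (hu : AEStronglyMeasurable u μ)
    (hD : Integrable (fun z => |u z| ^ 2 / ‖z‖ ^ (finrank ℝ E + 1)) μ) {B : ℝ}
    (hB : ∀ z, |u z| ≤ B) :
    ∫ z in {z : E | ‖z‖ ≤ 1}, |u z| / ‖z‖ ^ finrank ℝ E ∂μ ≤
      1 + μ.toSphere.real univ +
        B * (μ.toSphere.real univ * log⁺ (∫ z, |u z| ^ 2 / ‖z‖ ^ (finrank ℝ E + 1) ∂μ)) := by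
  set D := ∫ z, |u z| ^ 2 / ‖z‖ ^ (finrank ℝ E + 1) ∂μ
  have hD0 : 0 ≤ D := integral_nonneg fun z => by positivity
  have hmax : 0 < max 1 D := lt_max_of_lt_left one_pos
  set ρ := (max 1 D)⁻¹ with hρ_def
  have hρ : 0 < ρ := inv_pos.2 hmax
  have hρ1 : ρ ≤ 1 := inv_le_one_of_one_le₀ (le_max_left _ _)
  have hρD : ρ * D ≤ 1 := inv_mul_le_one_of_le₀ (le_max_right _ _) hmax.le
  have hlog : log (1 / ρ) = log⁺ D := by rw [posLog_eq_log_max_one hD0, hρ_def, one_div, inv_inv]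
  have hsplit : {z : E | ‖z‖ ≤ 1} = {z | ‖z‖ ≤ ρ} ∪ {z | ‖z‖ ∈ Ioc ρ 1} := by
    change norm ⁻¹' Iic 1 = norm ⁻¹' Iic ρ ∪ norm ⁻¹' Ioc ρ 1
    rw [← preimage_union, Iic_union_Ioc_eq_Iic hρ1]
  have hdisj : Disjoint {z : E | ‖z‖ ≤ ρ} {z | ‖z‖ ∈ Ioc ρ 1} :=
    (Iic_disjoint_Ioc le_rfl).preimage norm
  have hint := integrableOn_abs_div_norm_pow_finrank hu hD 1
  rw [hsplit] at hint ⊢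
  rw [setIntegral_union hdisj (measurable_norm measurableSet_Ioc) hint.left_of_union
    hint.right_of_union, ← hlog]
  gcongr
  · exact (setIntegral_abs_div_norm_pow_finrank_ball_le hu hD hρ).trans (by gcongr)
  · exact setIntegral_abs_div_norm_pow_finrank_annulus_le hu hD hB hρ hρ1

lemma integrable_abs_sq_div_norm_pow (hu : AEStronglyMeasurable u μ) {L B : ℝ}
    (hL : ∀ z, |u z| ≤ L * ‖z‖) (hB : ∀ z, |u z| ≤ B) :
    Integrable (fun z => |u z| ^ 2 / ‖z‖ ^ (finrank ℝ E + 1)) μ := by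
  have hmeas : AEStronglyMeasurable (fun z => |u z| ^ 2 / ‖z‖ ^ (finrank ℝ E + 1)) μ :=
    ((hu.aemeasurable.abs.pow_const 2).div (by fun_prop)).aestronglyMeasurable
  have hball : IntegrableOn (fun z => |u z| ^ 2 / ‖z‖ ^ (finrank ℝ E + 1)) {z | ‖z‖ ≤ 1} μ := by
    refine ((integrableOn_norm_div_norm_pow_finrank μ 1).const_mul (L ^ 2)).mono' hmeas.restrict
      (ae_of_all _ fun z => ?_)
    rw [norm_of_nonneg (by positivity)]
    calc |u z| ^ 2 / ‖z‖ ^ (finrank ℝ E + 1)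
        ≤ (L * ‖z‖) ^ 2 / ‖z‖ ^ (finrank ℝ E + 1) := by gcongr; exact hL z
      _ = L ^ 2 * (‖z‖ / ‖z‖ ^ finrank ℝ E) := by
        rcases eq_or_ne ‖z‖ 0 with hz | hz
        · simp [hz]
        · field_simp
          ring
  have htail : IntegrableOn (fun z => |u z| ^ 2 / ‖z‖ ^ (finrank ℝ E + 1)) {z | 1 < ‖z‖} μ := by
    refine ((integrableOn_one_div_norm_pow μ (Nat.lt_succ_self _) one_pos).const_mul
      (B ^ 2)).mono' hmeas.restrict (ae_of_all _ fun z => ?_)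
    rw [norm_of_nonneg (by positivity), mul_one_div]
    gcongr
    exact hB z
  rw [← integrableOn_univ]
  exact (hball.union htail).mono_set fun z _ => le_or_gt ‖z‖ 1

end LogInterpolation

lemma norm_integral_smul_le_eLpNorm_mul_eLpNorm {α F : Type*} [MeasurableSpace α]
    [NormedAddCommGroup F] [NormedSpace ℝ F] {ν : Measure α} {p q : ℝ≥0∞}
    [p.HolderConjugate q] {φ : α → ℝ} {ψ : α → F} (hφ : MemLp φ p ν) (hψ : MemLp ψ q ν) :
    ‖∫ a, φ a • ψ a ∂ν‖ ≤ (eLpNorm φ p ν).toReal * (eLpNorm ψ q ν).toReal := by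
  rw [← ENNReal.toReal_mul, ← toReal_enorm]
  refine ENNReal.toReal_mono (ENNReal.mul_ne_top hφ.eLpNorm_ne_top hψ.eLpNorm_ne_top) ?_
  calc ‖∫ a, φ a • ψ a ∂ν‖ₑ ≤ ∫⁻ a, ‖(φ • ψ) a‖ₑ ∂ν := enorm_integral_le_lintegral_enorm _
    _ = eLpNorm (φ • ψ) 1 ν := eLpNorm_one_eq_lintegral_enorm.symm
    _ ≤ eLpNorm φ p ν * eLpNorm ψ q ν := eLpNorm_smul_le_mul_eLpNorm hψ.1 hφ.1

section ForwardDifference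

lemma lipschitzWith_fwdDiff {X F : Type*} [SeminormedAddCommGroup X] [SeminormedAddCommGroup F]
    {f : X → F} {L : ℝ≥0} (hf : LipschitzWith L f) (h : X) : LipschitzWith (L + L) (Δ_[h] f) := by
  simpa using! (hf.comp (isometry_add_right h).lipschitz).sub hf

lemma abs_fwdDiff_sub_le {X : Type*} [AddCommMonoid X] {f : X → ℝ} {M : ℝ} (hM : ∀ z, |f z| ≤ M)
    (h x y : X) : |Δ_[h] f x - Δ_[h] f y| ≤ 4 * M := by
  have hdiff (z : X) : |Δ_[h] f z| ≤ M + M := (abs_sub _ _).trans (add_le_add (hM _) (hM _))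
  linarith [abs_sub (Δ_[h] f x) (Δ_[h] f y), hdiff x, hdiff y]

variable {X F : Type*} [AddCommGroup X] [MeasurableSpace X] [MeasurableAdd X] [NormedAddCommGroup F]
  {μ : Measure X} [μ.IsAddRightInvariant] {p : ℝ≥0∞} {f : X → F}

lemma memLp_fwdDiff (hf : MemLp f p μ) (h : X) : MemLp (Δ_[h] f) p μ :=
  (hf.comp_measurePreserving (measurePreserving_add_right μ h)).sub hf

lemma eLpNorm_fwdDiff_le (hf : AEStronglyMeasurable f μ) (hp : 1 ≤ p) (h : X) :
    eLpNorm (Δ_[h] f) p μ ≤ 2 * eLpNorm f p μ := by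
  have htrans := measurePreserving_add_right μ h
  calc eLpNorm (Δ_[h] f) p μ ≤ eLpNorm (f ∘ (· + h)) p μ + eLpNorm f p μ :=
        eLpNorm_sub_le (hf.comp_measurePreserving htrans) hf hp
    _ = 2 * eLpNorm f p μ := by rw [eLpNorm_comp_measurePreserving hf htrans, two_mul]

end ForwardDifference

section Translation

variable {E F : Type*} [NormedAddCommGroup E] [MeasurableSpace E] [BorelSpace E]
  [NormedAddCommGroup F] [NormedSpace ℝ F] {μ : Measure E} [μ.IsAddLeftInvariant]

lemma setIntegral_norm_sub_mem (φ : E → F) (x : E) (S : Set ℝ) :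
    ∫ y in {y | ‖x - y‖ ∈ S}, φ y ∂μ = ∫ z in {z | ‖z‖ ∈ S}, φ (x + z) ∂μ := by
  simpa using ((measurePreserving_add_left μ x).setIntegral_preimage_emb
    (measurableEmbedding_addLeft x) φ {y | ‖x - y‖ ∈ S}).symm

lemma norm_setIntegral_smul_comp_sub_le {p q : ℝ≥0∞} [p.HolderConjugate q] {g : E → ℝ}
    {K : E → F} {S : Set ℝ} (hg : MemLp g p μ)
    (hK : MemLp (fun z => K (-z)) q (μ.restrict {z | ‖z‖ ∈ S})) (x : E) :
    ‖∫ y in {y | ‖x - y‖ ∈ S}, g y • K (x - y) ∂μ‖ ≤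
      (eLpNorm g p μ).toReal * (eLpNorm (fun z => K (-z)) q (μ.restrict {z | ‖z‖ ∈ S})).toReal := by
  have htrans := measurePreserving_add_left μ x
  have hgx : MemLp (fun z => g (x + z)) p μ := hg.comp_measurePreserving htrans
  have hgx_norm : eLpNorm (fun z => g (x + z)) p μ = eLpNorm g p μ :=
    eLpNorm_comp_measurePreserving hg.1 htrans
  calc ‖∫ y in {y | ‖x - y‖ ∈ S}, g y • K (x - y) ∂μ‖
      = ‖∫ z in {z | ‖z‖ ∈ S}, g (x + z) • K (-z) ∂μ‖ := by
        simp only [setIntegral_norm_sub_mem, sub_add_cancel_left]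
    _ ≤ (eLpNorm (fun z => g (x + z)) p (μ.restrict {z | ‖z‖ ∈ S})).toReal *
          (eLpNorm (fun z => K (-z)) q (μ.restrict {z | ‖z‖ ∈ S})).toReal :=
        norm_integral_smul_le_eLpNorm_mul_eLpNorm (hgx.restrict _) hK
    _ ≤ _ := by
        gcongr
        · exact hg.eLpNorm_ne_top
        · exact (eLpNorm_restrict_le _ _ _ _).trans_eq hgx_norm

end Translation

section Convolution

variable {E : Type*} [NormedAddCommGroup E] [NormedSpace ℝ E] [MeasurableSpace E]
  {F : Type*} [NormedAddCommGroup F] [NormedSpace ℝ F]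

/-- The principal value convolution `P.V. ∫ g(y) K(x - y) dy` of an odd kernel `K`, written as an
absolutely convergent integral: subtracting `g x` on the unit ball does not change the principal
value, since `K` integrates to zero over annuli. -/
noncomputable def regularizedConvolution (μ : Measure E) (K : E → F) (g : E → ℝ) (x : E) : F :=
  (∫ y in {y | ‖x - y‖ ≤ 1}, (g y - g x) • K (x - y) ∂μ) +
    ∫ y in {y | 1 < ‖x - y‖}, g y • K (x - y) ∂μ

/-- The nonlocal dissipation `D₁(g)(x)` of the fractional Laplacian of order `1`. As a Bochner
integral it takes the junk value `0` when the integrand is not integrable. -/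
noncomputable def nonlocalDissipation (μ : Measure E) (g : E → ℝ) (x : E) : ℝ :=
  ∫ y, |g x - g (x + y)| ^ 2 / ‖y‖ ^ (finrank ℝ E + 1) ∂μ

variable [FiniteDimensional ℝ E] [BorelSpace E] {μ : Measure E} [μ.IsAddHaarMeasure]
  [Nontrivial E] {K : E → F} {A : ℝ} {g : E → ℝ}

lemma norm_setIntegral_sub_smul_le (hK : ∀ z ≠ 0, ‖K z‖ ≤ A / ‖z‖ ^ finrank ℝ E) (hA : 0 ≤ A)
    (hg : AEStronglyMeasurable g μ) {x : E} {B : ℝ} (hB : ∀ y, |g x - g y| ≤ B)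
    (hD : Integrable (fun y => |g x - g (x + y)| ^ 2 / ‖y‖ ^ (finrank ℝ E + 1)) μ) :
    ‖∫ y in {y | ‖x - y‖ ≤ 1}, (g y - g x) • K (x - y) ∂μ‖ ≤
      A * (1 + μ.toSphere.real univ +
        B * (μ.toSphere.real univ * log⁺ (nonlocalDissipation μ g x))) := by
  have hu : AEStronglyMeasurable (fun z => g x - g (x + z)) μ :=
    aestronglyMeasurable_const.sub (hg.comp_measurePreserving (measurePreserving_add_left μ x))
  have hpoint (z : E) : ‖(g (x + z) - g x) • K (x - (x + z))‖ ≤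
      A * (|g x - g (x + z)| / ‖z‖ ^ finrank ℝ E) := by
    rcases eq_or_ne z 0 with rfl | hz
    · simp
    calc ‖(g (x + z) - g x) • K (x - (x + z))‖ = |g x - g (x + z)| * ‖K (-z)‖ := by
          rw [norm_smul, norm_eq_abs, abs_sub_comm, sub_add_cancel_left]
      _ ≤ |g x - g (x + z)| * (A / ‖z‖ ^ finrank ℝ E) := by
          gcongr
          simpa using hK (-z) (neg_ne_zero.2 hz)
      _ = A * (|g x - g (x + z)| / ‖z‖ ^ finrank ℝ E) := by ring
  calc ‖∫ y in {y | ‖x - y‖ ≤ 1}, (g y - g x) • K (x - y) ∂μ‖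
      = ‖∫ z in {z | ‖z‖ ≤ 1}, (g (x + z) - g x) • K (x - (x + z)) ∂μ‖ :=
        congrArg norm (setIntegral_norm_sub_mem _ x (Iic 1))
    _ ≤ ∫ z in {z | ‖z‖ ≤ 1}, A * (|g x - g (x + z)| / ‖z‖ ^ finrank ℝ E) ∂μ :=
        norm_integral_le_of_norm_le
          ((integrableOn_abs_div_norm_pow_finrank hu hD 1).const_mul A) (ae_of_all _ hpoint)
    _ ≤ _ := by
        rw [integral_const_mul]
        exact mul_le_mul_of_nonneg_left
          (setIntegral_abs_div_norm_pow_finrank_le_posLog hu hD fun z => hB (x + z)) hA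

theorem velocity_difference_log_bound_general (hKm : AEStronglyMeasurable K μ)
    (hK : ∀ z ≠ 0, ‖K z‖ ≤ A / ‖z‖ ^ finrank ℝ E) :
    ∃ C > (0 : ℝ), ∀ {f : E → ℝ} {M : ℝ}, MemLp f 2 μ → (∀ z, |f z| ≤ M) → ∀ x h : E,
      Integrable (fun y => |Δ_[h] f x - Δ_[h] f (x + y)| ^ 2 / ‖y‖ ^ (finrank ℝ E + 1)) μ →
      ‖regularizedConvolution μ K (Δ_[h] f) x‖ ≤
        C * (1 + M * log⁺ (nonlocalDissipation μ (Δ_[h] f) x) + (eLpNorm f 2 μ).toReal) := by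
  have hA : 0 ≤ A := by
    obtain ⟨z, hz⟩ := exists_ne (0 : E)
    simpa using (le_div_iff₀ (by positivity)).1 ((norm_nonneg _).trans (hK z hz))
  have hKneg : MemLp (fun z => K (-z)) 2 (μ.restrict {z | 1 < ‖z‖}) :=
    memLp_two_restrict_of_norm_le_div_norm_pow μ
      (hKm.comp_measurePreserving (Measure.measurePreserving_neg μ))
      (fun z hz => by simpa using hK (-z) (neg_ne_zero.2 hz)) one_pos
  set κ := μ.toSphere.real univ
  set J := (eLpNorm (fun z => K (-z)) 2 (μ.restrict {z | 1 < ‖z‖})).toReal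
  have : 0 ≤ κ := measureReal_nonneg
  have : 0 ≤ J := ENNReal.toReal_nonneg
  refine ⟨1 + A * (1 + 4 * κ) + 2 * J, by positivity, fun {f M} hf hM x h hD => ?_⟩
  set N := (eLpNorm f 2 μ).toReal
  set ℓ := log⁺ (nonlocalDissipation μ (Δ_[h] f) x)
  have : 0 ≤ N := ENNReal.toReal_nonneg
  have : 0 ≤ M := (abs_nonneg _).trans (hM x)
  have : 0 ≤ ℓ := posLog_nonneg
  have hdiff := memLp_fwdDiff hf h
  have hdiff_norm : (eLpNorm (Δ_[h] f) 2 μ).toReal ≤ 2 * N := by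
    simpa [N] using ENNReal.toReal_mono (ENNReal.mul_ne_top ENNReal.ofNat_ne_top hf.eLpNorm_ne_top)
      (eLpNorm_fwdDiff_le hf.1 one_le_two h)
  calc ‖regularizedConvolution μ K (Δ_[h] f) x‖
      ≤ A * (1 + κ + 4 * M * (κ * ℓ)) + (eLpNorm (Δ_[h] f) 2 μ).toReal * J :=
        norm_add_le_of_le
          (norm_setIntegral_sub_smul_le hK hA hdiff.1 (abs_fwdDiff_sub_le hM h x) hD)
          (norm_setIntegral_smul_comp_sub_le (S := Ioi 1) hdiff hKneg x)
    _ ≤ A * (1 + κ + 4 * M * (κ * ℓ)) + 2 * N * J := by gcongr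
    _ ≤ (1 + A * (1 + 4 * κ) + 2 * J) * (1 + M * ℓ + N) := by
        have hgap : (1 + A * (1 + 4 * κ) + 2 * J) * (1 + M * ℓ + N) -
            (A * (1 + κ + 4 * M * (κ * ℓ)) + 2 * N * J) =
            (1 + M * ℓ + N) + A * (M * ℓ + N) + A * κ * (3 + 4 * N) + 2 * J * (1 + M * ℓ) := by
          ring
        exact sub_nonneg.1 (hgap ▸ by positivity)

end Convolution

section RieszKernel

variable {E : Type*} [NormedAddCommGroup E] [NormedSpace ℝ E]

/-- The kernel `z / |z| ^ (d + 1)` of `∇Λ⁻¹`, up to a constant factor. -/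
noncomputable def rieszKernel (z : E) : E := (‖z‖ ^ (finrank ℝ E + 1))⁻¹ • z

lemma norm_rieszKernel {z : E} (hz : z ≠ 0) : ‖rieszKernel z‖ = 1 / ‖z‖ ^ finrank ℝ E := by
  have : ‖z‖ ≠ 0 := norm_ne_zero_iff.2 hz
  rw [rieszKernel, norm_smul, norm_inv, norm_pow, norm_norm]
  field_simp
  ring

lemma measurable_rieszKernel [MeasurableSpace E] [BorelSpace E] [SecondCountableTopology E] :
    Measurable (rieszKernel : E → E) := by
  unfold rieszKernel
  fun_prop

end RieszKernel

section Schwartz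

variable {E : Type*} [NormedAddCommGroup E] [NormedSpace ℝ E]

lemma norm_schwartzMap_le_iSup {F : Type*} [NormedAddCommGroup F] [NormedSpace ℝ F]
    (f : SchwartzMap E F) (z : E) : ‖f z‖ ≤ ⨆ z, ‖f z‖ :=
  le_ciSup (f := fun z => ‖f z‖)
    ⟨SchwartzMap.seminorm ℝ 0 0 f, forall_mem_range.2 (f.norm_le_seminorm ℝ)⟩ z

lemma exists_lipschitzWith_schwartzMap {F : Type*} [NormedAddCommGroup F] [NormedSpace ℝ F]
    (f : SchwartzMap E F) : ∃ L : ℝ≥0, LipschitzWith L f := by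
  have hderiv := (SchwartzMap.fderivCLM ℝ E F f).norm_le_seminorm ℝ
  exact ⟨⟨_, (norm_nonneg _).trans (hderiv 0)⟩,
    lipschitzWith_of_nnnorm_fderiv_le f.differentiable hderiv⟩

lemma integrable_dissipation_fwdDiff_schwartzMap [FiniteDimensional ℝ E] [Nontrivial E]
    [MeasurableSpace E] [BorelSpace E] (μ : Measure E) [μ.IsAddHaarMeasure]
    (f : SchwartzMap E ℝ) (x h : E) :
    Integrable (fun y => |Δ_[h] f x - Δ_[h] f (x + y)| ^ 2 / ‖y‖ ^ (finrank ℝ E + 1)) μ := by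
  obtain ⟨L, hL⟩ := exists_lipschitzWith_schwartzMap f
  have hdiff : LipschitzWith (L + L) (Δ_[h] f) := lipschitzWith_fwdDiff hL h
  have hcont : Continuous (Δ_[h] f) := hdiff.continuous
  refine integrable_abs_sq_div_norm_pow (by fun_prop) (L := (L + L : ℝ≥0)) (fun y => ?_)
    fun y => abs_fwdDiff_sub_le (norm_schwartzMap_le_iSup f) h x (x + y)
  simpa [Real.dist_eq] using hdiff.dist_le_mul x (x + y)

end Schwartz

/-- Logarithmic bound for the finite difference of the velocity in the case `α = 1/2`:
`|δ_h u(x)| ≤ C (1 + ‖f‖_∞ · ln⁺ D₁(δ_h f)(x) + ‖f‖_{L²})`. -/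
theorem velocity_difference_log_bound (n : ℕ) (hn : 2 ≤ n) :
    ∃ C > (0 : ℝ), ∀ (f : SchwartzMap (EuclideanSpace ℝ (Fin n)) ℝ)
      (x h : EuclideanSpace ℝ (Fin n)),
      ‖(∫ y in {y : EuclideanSpace ℝ (Fin n) | ‖x - y‖ ≤ 1},
            (((f (y + h) - f y) - (f (x + h) - f x)) / ‖x - y‖ ^ ((n : ℝ) + 1)) • (x - y)) +
          ∫ y in {y : EuclideanSpace ℝ (Fin n) | 1 < ‖x - y‖},
            ((f (y + h) - f y) / ‖x - y‖ ^ ((n : ℝ) + 1)) • (x - y)‖ ≤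
        C * (1 + (⨆ z : EuclideanSpace ℝ (Fin n), |f z|) *
              max (Real.log (∫ y : EuclideanSpace ℝ (Fin n),
                |(f (x + h) - f x) - (f (x + y + h) - f (x + y))| ^ 2 / ‖y‖ ^ ((n : ℝ) + 1))) 0
            + (eLpNorm (⇑f) 2 volume).toReal) := by
  have : Nonempty (Fin n) := ⟨⟨0, by omega⟩⟩
  have hpow (r : ℝ) : r ^ ((n : ℝ) + 1) = r ^ (n + 1) := mod_cast rpow_natCast r (n + 1)
  obtain ⟨C, hC, hbound⟩ := velocity_difference_log_bound_general
    (μ := (volume : Measure (EuclideanSpace ℝ (Fin n)))) (K := rieszKernel)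
    measurable_rieszKernel.aestronglyMeasurable fun z hz => (norm_rieszKernel hz).le
  refine ⟨C, hC, fun f x h => ?_⟩
  simpa only [regularizedConvolution, nonlocalDissipation, rieszKernel, fwdDiff, smul_smul, hpow,
    ← div_eq_mul_inv, finrank_euclideanSpace_fin, posLog_apply, max_comm (0 : ℝ)] using
    hbound (M := ⨆ z, |f z|) (f.memLp 2) (norm_schwartzMap_le_iSup f) x h
      (integrable_dissipation_fwdDiff_schwartzMap volume f x h)
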